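/- arXiv:0805.4533 — 2 statements merged into one kernel-verified Lean document; each statement's English description precedes it below -/
import Mathlib

section
/- Let P ⊆ ℝ^d be a d-dimensional simplicial reflexive polytope and F a facet of P. Suppose there are at least d−1 vertices e_1,…,e_{d−1} ∈ 𝒱(F) such that for every 1 ≤ i ≤ d−1 the neighboring vertex n(F,e_i) satisfies ⟨u_F, n(F,e_i)⟩ = 0 and ⟨u_F^{e_i}, n(F,e_i)⟩ = −1. Then 𝒱(F) is a ℤ-basis of the lattice ℤ^d. -/
noncomputable section

/-- The standard inner product on `ℝ^d`. -/
def dotp {d : ℕ} (x y : Fin d → ℝ) : ℝ := ∑ i, x i * y i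

/-- `x` is a point of the lattice `ℤ^d`. -/
def IsLP {d : ℕ} (x : Fin d → ℝ) : Prop := ∀ i, ∃ n : ℤ, x i = (n : ℝ)

/-- A lattice polytope: convex hull of finitely many lattice points. -/
def IsLatticePolytope {d : ℕ} (P : Set (Fin d → ℝ)) : Prop :=
  ∃ V : Finset (Fin d → ℝ), (∀ v ∈ V, IsLP v) ∧ P = convexHull ℝ (V : Set (Fin d → ℝ))

/-- The dual polytope `P* = {x | ⟨x,y⟩ ≤ 1 ∀ y ∈ P}`. -/
def dualPolytope {d : ℕ} (P : Set (Fin d → ℝ)) : Set (Fin d → ℝ) :=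
  {x | ∀ y ∈ P, dotp x y ≤ 1}

/-- `P` is a reflexive polytope: a (`d`-dimensional) lattice polytope with `0` in its
interior whose dual is again a lattice polytope. -/
def IsReflexive {d : ℕ} (P : Set (Fin d → ℝ)) : Prop :=
  IsLatticePolytope P ∧ (0 : Fin d → ℝ) ∈ interior P ∧ IsLatticePolytope (dualPolytope P)

/-- `F` is a facet of `P` with (uniquely determined) outer normal `u`, normalized by
`⟨u, F⟩ = 1` (possible since `0` is in the interior of `P`). -/
def IsFacetNormal {d : ℕ} (P F : Set (Fin d → ℝ)) (u : Fin d → ℝ) : Prop :=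
  F.Nonempty ∧ (∀ y ∈ P, dotp u y ≤ 1) ∧ F = {y ∈ P | dotp u y = 1} ∧
    Module.finrank ℝ (vectorSpan ℝ F) = d - 1

/-- `F` is a facet of `P`. -/
def IsFacet {d : ℕ} (P F : Set (Fin d → ℝ)) : Prop := ∃ u, IsFacetNormal P F u

/-- `P` is simplicial: every facet has exactly `d` vertices. -/
def IsSimplicial {d : ℕ} (P : Set (Fin d → ℝ)) : Prop :=
  ∀ F, IsFacet P F → (Set.extremePoints ℝ F).ncard = d

/-- `F'` is the neighboring facet `N(F,w)`: a facet different from `F` containing all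
vertices of `F` except `w`. -/
def NbrFacet {d : ℕ} (P F : Set (Fin d → ℝ)) (w : Fin d → ℝ) (F' : Set (Fin d → ℝ)) : Prop :=
  IsFacet P F' ∧ F' ≠ F ∧ Set.extremePoints ℝ F \ {w} ⊆ F'

/-- `v'` is the neighboring vertex `n(F,w)`: the vertex of the neighboring facet `N(F,w)`
not contained in `F`. -/
def NbrVertex {d : ℕ} (P F : Set (Fin d → ℝ)) (w v' : Fin d → ℝ) : Prop :=
  ∃ F', NbrFacet P F w F' ∧ v' ∈ Set.extremePoints ℝ F' ∧ v' ∉ F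

/-- The set `B` is a `ℤ`-basis of the lattice `ℤ^d`. -/
def IsZBasis {d : ℕ} (B : Set (Fin d → ℝ)) : Prop :=
  ∃ b : Fin d → (Fin d → ℝ), Function.Injective b ∧ Set.range b = B ∧
    (∀ i, IsLP (b i)) ∧ ∀ x : Fin d → ℝ, IsLP x → ∃ c : Fin d → ℤ, x = ∑ i, (c i : ℝ) • b i


lemma dotp_comm' {d : ℕ} (x y : Fin d → ℝ) : dotp x y = dotp y x := by
  simp [dotp, mul_comm]

lemma dotp_add_r {d : ℕ} (x y z : Fin d → ℝ) : dotp x (y + z) = dotp x y + dotp x z := by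
  simp [dotp, mul_add, Finset.sum_add_distrib]

lemma dotp_smul_r {d : ℕ} (x y : Fin d → ℝ) (c : ℝ) : dotp x (c • y) = c * dotp x y := by
  simp only [dotp, Finset.mul_sum, Pi.smul_apply, smul_eq_mul]
  exact Finset.sum_congr rfl fun i _ => by ring

/-- `dotp x` as a linear map. -/
def dlin {d : ℕ} (x : Fin d → ℝ) : (Fin d → ℝ) →ₗ[ℝ] ℝ where
  toFun := dotp x
  map_add' := dotp_add_r x
  map_smul' c y := dotp_smul_r x y c

@[simp] lemma dlin_apply {d : ℕ} (x y : Fin d → ℝ) : dlin x y = dotp x y := rfl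

lemma dotp_add_l {d : ℕ} (x y z : Fin d → ℝ) : dotp (x + y) z = dotp x z + dotp y z := by
  rw [dotp_comm', dotp_add_r, dotp_comm' z x, dotp_comm' z y]

lemma dotp_smul_l {d : ℕ} (x z : Fin d → ℝ) (c : ℝ) : dotp (c • x) z = c * dotp x z := by
  rw [dotp_comm', dotp_smul_r, dotp_comm' z x]

lemma dotp_sub_l {d : ℕ} (x y z : Fin d → ℝ) : dotp (x - y) z = dotp x z - dotp y z := by
  simp [dotp, sub_mul, Finset.sum_sub_distrib]

lemma dotp_sum_l {d : ℕ} {ι : Type*} (s : Finset ι) (f : ι → Fin d → ℝ) (z : Fin d → ℝ) :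
    dotp (∑ i ∈ s, f i) z = ∑ i ∈ s, dotp (f i) z := by
  rw [dotp_comm', ← dlin_apply, map_sum]
  exact Finset.sum_congr rfl fun i _ => by rw [dlin_apply, dotp_comm']

lemma dotp_self_pos {d : ℕ} (x : Fin d → ℝ) (hx : x ≠ 0) : 0 < dotp x x := by
  obtain ⟨i, hi⟩ := Function.ne_iff.mp hx
  refine Finset.sum_pos' (fun j _ => mul_self_nonneg _) ⟨i, Finset.mem_univ _, ?_⟩
  exact mul_self_pos.mpr hi

lemma eq_zero_of_span {d : ℕ} {S : Set (Fin d → ℝ)} (hS : Submodule.span ℝ S = ⊤)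
    (x : Fin d → ℝ) (h : ∀ z ∈ S, dotp x z = 0) : x = 0 := by
  by_contra hx
  have h1 : Submodule.span ℝ S ≤ LinearMap.ker (dlin x) := by
    rw [Submodule.span_le]; intro z hz; simpa using h z hz
  have : x ∈ LinearMap.ker (dlin x) := h1 (by rw [hS]; trivial)
  exact (dotp_self_pos x hx).ne' (by simpa using this)

lemma span_of_eq_zero {d : ℕ} {S : Set (Fin d → ℝ)}
    (h : ∀ x : Fin d → ℝ, (∀ z ∈ S, dotp x z = 0) → x = 0) : Submodule.span ℝ S = ⊤ := by
  by_contra hS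
  obtain ⟨f, hf, hle⟩ := Submodule.exists_le_ker_of_lt_top _ (lt_top_iff_ne_top.mpr hS)
  have key : ∀ z, dotp (fun i => f (Pi.single i 1)) z = f z := by
    intro z
    conv_rhs => rw [pi_eq_sum_univ' z, map_sum]
    simp only [dotp, map_smul, smul_eq_mul]
    refine Finset.sum_congr rfl fun i _ => ?_
    rw [mul_comm]
  have h0 := h _ (fun z hz => by
    rw [key]; exact hle (Submodule.subset_span hz))
  apply hf
  refine LinearMap.ext fun z => ?_
  rw [← key, h0]; simp [dotp]

lemma pos_dim {d : ℕ} {P F : Set (Fin d → ℝ)} {u : Fin d → ℝ} (hF : IsFacetNormal P F u) :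
    0 < d := by
  rcases Nat.eq_zero_or_pos d with h | h
  · subst h
    obtain ⟨⟨y, hy⟩, -, h3, -⟩ := hF
    rw [h3] at hy
    have := hy.2
    simp [dotp] at this
  · exact h

lemma vspan_lt {d : ℕ} {F : Set (Fin d → ℝ)} {u : Fin d → ℝ} (hne : F.Nonempty)
    (h : ∀ y ∈ F, dotp u y = 1) : vectorSpan ℝ F < Submodule.span ℝ F := by
  have hker : vectorSpan ℝ F ≤ LinearMap.ker (dlin u) := by
    rw [vectorSpan, Submodule.span_le]
    rintro _ ⟨a, ha, b, hb, rfl⟩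
    have : dlin u (a - b) = 0 := by rw [map_sub]; simp [h a ha, h b hb]
    simpa using this
  refine lt_of_le_of_ne ?_ ?_
  · rw [vectorSpan, Submodule.span_le]
    rintro _ ⟨a, ha, b, hb, rfl⟩
    exact Submodule.sub_mem _ (Submodule.subset_span ha) (Submodule.subset_span hb)
  · intro heq
    obtain ⟨z, hz⟩ := hne
    have : z ∈ LinearMap.ker (dlin u) := hker (heq ▸ Submodule.subset_span hz)
    have h2 : dotp u z = 0 := by simpa using this
    linarith [h z hz]

lemma facet_span {d : ℕ} {P F : Set (Fin d → ℝ)} {u : Fin d → ℝ} (hF : IsFacetNormal P F u) :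
    Submodule.span ℝ F = ⊤ := by
  have hd := pos_dim hF
  have h1 : ∀ y ∈ F, dotp u y = 1 := fun y hy => by
    have := hF.2.2.1 ▸ hy; exact this.2
  have h2 := Submodule.finrank_lt_finrank_of_lt (vspan_lt hF.1 h1)
  rw [hF.2.2.2] at h2
  apply Submodule.eq_top_of_finrank_eq
  have := Submodule.finrank_le (Submodule.span ℝ F)
  simp only [Module.finrank_fin_fun] at this ⊢
  omega

lemma finrank_of_span {d : ℕ} {F : Set (Fin d → ℝ)} {u : Fin d → ℝ} (hne : F.Nonempty)
    (h : ∀ y ∈ F, dotp u y = 1) (hs : Submodule.span ℝ F = ⊤) :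
    Module.finrank ℝ (vectorSpan ℝ F) = d - 1 := by
  have h1 := Submodule.finrank_lt_finrank_of_lt (vspan_lt hne h)
  obtain ⟨z, hz⟩ := hne
  have h2 : Submodule.span ℝ F ≤ vectorSpan ℝ F ⊔ Submodule.span ℝ {z} := by
    rw [Submodule.span_le]
    intro y hy
    have : y = (y - z) + z := by simp
    rw [this]
    exact Submodule.add_mem_sup (vsub_mem_vectorSpan ℝ hy hz)
      (Submodule.mem_span_singleton_self z)
  have h3 := Submodule.finrank_mono h2
  have h4 := Submodule.finrank_add_le_finrank_add_finrank (vectorSpan ℝ F) (Submodule.span ℝ {z})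
  have h5 : Module.finrank ℝ (Submodule.span ℝ {z}) ≤ 1 := by
    have := finrank_span_le_card (R := ℝ) ({z} : Set (Fin d → ℝ))
    simpa using this
  rw [hs] at h1 h3
  simp only [finrank_top, Module.finrank_fin_fun] at h1 h3
  omega

lemma normal_LP {d : ℕ} {P F : Set (Fin d → ℝ)} {u : Fin d → ℝ} (hP : IsReflexive P)
    (hF : IsFacetNormal P F u) : IsLP u := by
  obtain ⟨W, hW, hWe⟩ := hP.2.2
  apply hW
  have h1 : ∀ y ∈ F, y ∈ P ∧ dotp u y = 1 := fun y hy => by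
    have := hF.2.2.1 ▸ hy; exact this
  have : u ∈ Set.extremePoints ℝ (dualPolytope P) := by
    refine ⟨hF.2.1, ?_⟩
    rintro x hx y hy ⟨a, b, ha, hb, hab, hu⟩
    have : x - u = 0 := by
      apply eq_zero_of_span (facet_span hF)
      intro z hz
      have e1 := hx z (h1 z hz).1
      have e2 := hy z (h1 z hz).1
      have e3 := (h1 z hz).2
      have e4 : a * dotp x z + b * dotp y z = 1 := by
        rw [← e3, ← hu, dotp_add_l, dotp_smul_l, dotp_smul_l]
      rw [dotp_sub_l, e3]
      nlinarith
    exact sub_eq_zero.mp this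
  rw [hWe] at this
  exact extremePoints_convexHull_subset this

lemma face_extreme {d : ℕ} {P F : Set (Fin d → ℝ)} {u : Fin d → ℝ}
    (hu : ∀ y ∈ P, dotp u y ≤ 1) (hF : F = {y ∈ P | dotp u y = 1}) : IsExtreme ℝ P F := by
  subst hF
  refine ⟨fun y hy => hy.1, ?_⟩
  rintro x hx y hy z hz ⟨a, b, ha, hb, hab, rfl⟩
  have e1 := hu x hx
  have e2 := hu y hy
  have e3 := hz.2
  rw [dotp_add_r, dotp_smul_r, dotp_smul_r] at e3
  refine ⟨hx, ?_⟩
  nlinarith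

lemma dlin_cont {d : ℕ} (u : Fin d → ℝ) : Continuous (dotp u) :=
  (dlin u).continuous_of_finiteDimensional

lemma face_compact {d : ℕ} {P F : Set (Fin d → ℝ)} {u : Fin d → ℝ}
    (hP : IsLatticePolytope P) (hF : F = {y ∈ P | dotp u y = 1}) : IsCompact F ∧ Convex ℝ F := by
  obtain ⟨V, -, rfl⟩ := hP
  subst hF
  have hc : IsCompact (convexHull ℝ (V : Set (Fin d → ℝ))) :=
    V.finite_toSet.isCompact_convexHull ℝ
  constructor
  · exact hc.inter_right (isClosed_eq (dlin_cont u) continuous_const)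
  · exact (convex_convexHull ℝ _).inter (convex_hyperplane (dlin u).isLinear 1)

lemma face_hull {d : ℕ} {P F : Set (Fin d → ℝ)} {u : Fin d → ℝ}
    (hP : IsLatticePolytope P) (hu : ∀ y ∈ P, dotp u y ≤ 1) (hF : F = {y ∈ P | dotp u y = 1}) :
    convexHull ℝ (Set.extremePoints ℝ F) = F := by
  obtain ⟨h1, h2⟩ := face_compact hP hF
  have h3 := closure_convexHull_extremePoints h1 h2
  have hsub := (face_extreme hu hF).extremePoints_subset_extremePoints
  obtain ⟨V, -, rfl⟩ := hP
  have hfin : (Set.extremePoints ℝ F).Finite :=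
    V.finite_toSet.subset (hsub.trans extremePoints_convexHull_subset)
  rwa [(hfin.isClosed_convexHull ℝ).closure_eq] at h3

lemma ext_LP {d : ℕ} {P F : Set (Fin d → ℝ)} {u : Fin d → ℝ}
    (hP : IsLatticePolytope P) (hu : ∀ y ∈ P, dotp u y ≤ 1) (hF : F = {y ∈ P | dotp u y = 1}) :
    ∀ v ∈ Set.extremePoints ℝ F, IsLP v := by
  have hsub := (face_extreme hu hF).extremePoints_subset_extremePoints
  obtain ⟨V, hV, rfl⟩ := hP
  intro v hv
  exact hV v (extremePoints_convexHull_subset (hsub hv))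

/-- Existence of the neighbouring facet. -/
lemma nbr_exists {d : ℕ} {P F : Set (Fin d → ℝ)} {u w e : Fin d → ℝ} (hP : IsReflexive P)
    (hF : IsFacetNormal P F u) (he : e ∈ Set.extremePoints ℝ F) (hwe : dotp w e = 1)
    (hw : ∀ w' ∈ Set.extremePoints ℝ F, w' ≠ e → dotp w w' = 0) :
    ∃ t : ℝ, ∃ F' v', IsFacetNormal P F' (u - t • w) ∧ NbrFacet P F e F' ∧
      v' ∈ Set.extremePoints ℝ F' ∧ v' ∉ F := by
  have hLP := hP.1
  have hhull := face_hull hLP hF.2.1 hF.2.2.1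
  have hspan : Submodule.span ℝ (Set.extremePoints ℝ F) = ⊤ := by
    rw [eq_top_iff, ← facet_span hF, Submodule.span_le]
    conv_lhs => rw [← hhull]
    exact convexHull_min Submodule.subset_span (Submodule.convex _)
  have hFnn : ∀ y ∈ F, 0 ≤ dotp w y := by
    intro y hy
    rw [← hhull] at hy
    refine convexHull_min (t := {y | 0 ≤ dotp w y}) ?_ (convex_halfSpace_ge (dlin w).isLinear 0) hy
    intro z hz
    by_cases h : z = e
    · subst h; simp [hwe]
    · simp [hw z hz h]
  obtain ⟨V, hV, hPV⟩ := hP.1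
  have hVP : ∀ y ∈ V, y ∈ P := fun y hy => hPV ▸ subset_convexHull ℝ _ hy
  have hw0 : w ≠ 0 := by rintro rfl; simp [dotp] at hwe
  classical
  let N := V.filter (fun y => dotp w y < 0)
  have hN : N.Nonempty := by
    by_contra hN
    have hall : ∀ y ∈ P, 0 ≤ dotp w y := by
      intro y hy
      rw [hPV] at hy
      refine convexHull_min (t := {y | 0 ≤ dotp w y}) ?_
        (convex_halfSpace_ge (dlin w).isLinear 0) hy
      intro z hz
      by_contra hlt
      exact hN ⟨z, Finset.mem_filter.mpr ⟨hz, not_le.mp hlt⟩⟩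
    have hcont : Filter.Tendsto (fun s : ℝ => s • w) (nhds 0) (nhds 0) := by
      have : Continuous (fun s : ℝ => s • w) := by fun_prop
      simpa using this.tendsto 0
    have hev := hcont (mem_interior_iff_mem_nhds.mp hP.2.1)
    obtain ⟨ε, hε, hb⟩ := Metric.mem_nhds_iff.mp hev
    have : (-(ε/2)) ∈ Metric.ball (0:ℝ) ε := by
      simp [abs_of_pos hε]; exact hε
    have h1 := hall _ (hb this)
    simp only [dotp_smul_r] at h1
    have := dotp_self_pos w hw0
    nlinarith
  obtain ⟨y, hyN, hmin⟩ := N.exists_min_image (fun y => (1 - dotp u y) / (- dotp w y)) hN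
  obtain ⟨hyV, hyw⟩ := Finset.mem_filter.mp hyN
  set t := (1 - dotp u y) / (- dotp w y) with ht
  have hyF : y ∉ F := fun h => absurd (hFnn y h) (not_le.mpr hyw)
  have hyt : dotp (u - t • w) y = 1 := by
    rw [dotp_sub_l, dotp_smul_l, ht]; have := hyw.ne; field_simp; ring
  have ht0 : 0 ≤ t := div_nonneg (by linarith [hF.2.1 y (hVP y hyV)]) (by linarith)
  have hval : ∀ z ∈ P, dotp (u - t • w) z ≤ 1 := by
    intro z hz
    rw [hPV] at hz
    refine convexHull_min (t := {y | dotp (u - t • w) y ≤ 1}) ?_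
        (convex_halfSpace_le (dlin (u - t • w)).isLinear 1) hz
    intro z hz
    have hz1 := hF.2.1 z (hVP z hz)
    simp only [Set.mem_ofPred_eq, dotp_sub_l, dotp_smul_l]
    by_cases h : dotp w z < 0
    · have h2 := hmin z (Finset.mem_filter.mpr ⟨hz, h⟩)
      rw [le_div_iff₀ (by linarith)] at h2
      linarith
    · have := mul_nonneg ht0 (not_lt.mp h)
      linarith
  let F' := {z ∈ P | dotp (u - t • w) z = 1}
  have hF1 : ∀ z ∈ F, z ∈ P ∧ dotp u z = 1 := fun y hy => by
    have := hF.2.2.1 ▸ hy; exact this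
  have hridge : Set.extremePoints ℝ F \ {e} ⊆ F' := by
    rintro z ⟨hz, hze⟩
    have h1 := hF1 z hz.1
    refine ⟨h1.1, ?_⟩
    rw [dotp_sub_l, dotp_smul_l, hw z hz hze, h1.2]; ring
  have hyF' : y ∈ F' := ⟨hVP y hyV, hyt⟩
  have hspan' : Submodule.span ℝ F' = ⊤ := by
    apply span_of_eq_zero
    intro x hx
    have h1 : x - (dotp x e) • w = 0 := by
      apply eq_zero_of_span hspan
      intro z hz
      rw [dotp_sub_l, dotp_smul_l]
      by_cases h : z = e
      · subst h; rw [hwe]; ring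
      · rw [hw z hz h, hx z (hridge ⟨hz, h⟩)]; ring
    have h2 : x = (dotp x e) • w := sub_eq_zero.mp h1
    have h3 := hx y hyF'
    rw [h2, dotp_smul_l] at h3
    rcases mul_eq_zero.mp h3 with h4 | h4
    · rw [h2, h4, zero_smul]
    · exact absurd h4 hyw.ne
  have hfac : IsFacetNormal P F' (u - t • w) :=
    ⟨⟨y, hyF'⟩, hval, rfl, finrank_of_span ⟨y, hyF'⟩ (fun z hz => hz.2) hspan'⟩
  have hv : ∃ v' ∈ Set.extremePoints ℝ F', v' ∉ F := by
    by_contra! hcon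
    have h1 := face_hull hP.1 hval (F := F') rfl
    have h2 : convexHull ℝ (Set.extremePoints ℝ F') ⊆ F :=
      convexHull_min hcon (face_compact hP.1 hF.2.2.1).2
    exact hyF (h2 (h1.symm ▸ hyF'))
  obtain ⟨v', hv', hv'F⟩ := hv
  exact ⟨t, F', v', hfac, ⟨⟨_, hfac⟩, fun h => hyF (h ▸ hyF'), hridge⟩, hv', hv'F⟩

lemma isLP_sub {d : ℕ} {x y : Fin d → ℝ} (hx : IsLP x) (hy : IsLP y) : IsLP (x - y) := by
  intro i
  obtain ⟨a, ha⟩ := hx i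
  obtain ⟨b, hb⟩ := hy i
  exact ⟨a - b, by simp [ha, hb]⟩

lemma isLP_sum {d : ℕ} {ι : Type*} (s : Finset ι) (f : ι → Fin d → ℝ) (h : ∀ i ∈ s, IsLP (f i)) :
    IsLP (∑ i ∈ s, f i) := by
  intro j
  choose! g hg using fun i hi => h i hi j
  refine ⟨∑ i ∈ s, g i, ?_⟩
  rw [Finset.sum_apply, Int.cast_sum]
  exact Finset.sum_congr rfl hg

lemma isLP_dotp {d : ℕ} {x y : Fin d → ℝ} (hx : IsLP x) (hy : IsLP y) :
    ∃ n : ℤ, dotp x y = n := by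
  choose f hf using hx
  choose g hg using hy
  exact ⟨∑ i, f i * g i, by simp [dotp, hf, hg]⟩

/-- if at least `d-1` vertices `e_i` of a facet `F` have their neighboring
vertices `n(F,e_i)` in `H(F,0)` with `⟨u_F^{e_i}, n(F,e_i)⟩ = -1`, then `𝒱(F)` is a
`ℤ`-basis of `ℤ^d`. -/
theorem stmt12 {d : ℕ} (P : Set (Fin d → ℝ)) (hP : IsReflexive P) (hs : IsSimplicial P)
    (F : Set (Fin d → ℝ)) (u : Fin d → ℝ) (hF : IsFacetNormal P F u)
    (uv : (Fin d → ℝ) → (Fin d → ℝ))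
    (huv : ∀ w ∈ Set.extremePoints ℝ F, dotp (uv w) w = 1 ∧
      ∀ w' ∈ Set.extremePoints ℝ F, w' ≠ w → dotp (uv w) w' = 0)
    (e : Fin (d - 1) → (Fin d → ℝ)) (he : Function.Injective e)
    (heF : ∀ i, e i ∈ Set.extremePoints ℝ F)
    (hnbr : ∀ i, ∀ v', NbrVertex P F (e i) v' →
      dotp u v' = 0 ∧ dotp (uv (e i)) v' = -1) :
    IsZBasis (Set.extremePoints ℝ F) := by
  classical
  have hd := pos_dim hF
  have hcard := hs F ⟨u, hF⟩
  have hfin : (Set.extremePoints ℝ F).Finite := Set.finite_of_ncard_pos (by omega)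
  have hhull := face_hull hP.1 hF.2.1 hF.2.2.1
  have hspan : Submodule.span ℝ (Set.extremePoints ℝ F) = ⊤ := by
    rw [eq_top_iff, ← facet_span hF, Submodule.span_le]
    conv_lhs => rw [← hhull]
    exact convexHull_min Submodule.subset_span (Submodule.convex _)
  have huLP := normal_LP hP hF
  have hF1 : ∀ z ∈ F, dotp u z = 1 := fun y hy => by
    have := hF.2.2.1 ▸ hy; exact this.2
  have hei : ∀ i, IsLP (uv (e i)) := by
    intro i
    obtain ⟨t, F', v', h1, h2, h3, h4⟩ := nbr_exists hP hF (heF i) (huv _ (heF i)).1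
      (huv _ (heF i)).2
    obtain ⟨h5, h6⟩ := hnbr i v' ⟨F', h2, h3, h4⟩
    have h7 : dotp (u - t • uv (e i)) v' = 1 := by
      have h8 : v' ∈ F' := h3.1
      rw [h1.2.2.1] at h8
      exact h8.2
    rw [dotp_sub_l, dotp_smul_l, h5, h6] at h7
    have ht : t = 1 := by linarith
    have h9 := isLP_sub huLP (normal_LP hP h1)
    rwa [ht, one_smul, sub_sub_cancel] at h9
  obtain ⟨n, b, hbinj, hbr⟩ : ∃ n, ∃ b : Fin n → (Fin d → ℝ), Function.Injective b ∧
      Set.range b = Set.extremePoints ℝ F := by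
    obtain ⟨n, b, hb⟩ := hfin.fin_param
    exact ⟨n, b, hb⟩
  have hn : n = d := by
    rw [← hbr, Set.ncard_range_of_injective hbinj] at hcard
    simpa using hcard
  subst hn
  have hbF : ∀ i, b i ∈ Set.extremePoints ℝ F := fun i => hbr ▸ Set.mem_range_self i
  have hdual : ∀ i j, dotp (uv (b i)) (b j) = if i = j then 1 else 0 := by
    intro i j
    split_ifs with h
    · subst h; exact (huv _ (hbF i)).1
    · exact (huv _ (hbF i)).2 _ (hbF j) (fun h' => h (hbinj h').symm)
  have hsum : u = ∑ i, uv (b i) := by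
    apply sub_eq_zero.mp
    apply eq_zero_of_span hspan
    rw [← hbr]
    rintro _ ⟨j, rfl⟩
    rw [dotp_sub_l, dotp_sum_l, hF1 _ (hbF j).1]
    simp [hdual]
  have hbe : ∀ i, ∃ j, b j = e i := fun i => by
    have := heF i
    rw [← hbr] at this
    exact this
  choose σ hσ using hbe
  have hσinj : Function.Injective σ := fun i j h => he (by rw [← hσ, ← hσ, h])
  have hall : ∀ j, IsLP (uv (b j)) := by
    intro j
    by_cases hj : j ∈ Set.range σ
    · obtain ⟨i, rfl⟩ := hj
      rw [hσ]; exact hei i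
    · have hcov : ∀ k, k ≠ j → k ∈ Set.range σ := by
        intro k hk
        by_contra hkr
        have hsub : Finset.univ.image σ ⊆ (Finset.univ.erase j).erase k := by
          intro m hm
          obtain ⟨i, -, rfl⟩ := Finset.mem_image.mp hm
          simp only [Finset.mem_erase, Finset.mem_univ, and_true]
          exact ⟨fun h => hkr ⟨i, h⟩, fun h => hj ⟨i, h⟩⟩
        have h1 := Finset.card_le_card hsub
        rw [Finset.card_image_of_injective _ hσinj, Finset.card_erase_of_mem (by simp [hk]),
          Finset.card_erase_of_mem (by simp)] at h1
        have hlt : 1 < n := by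
          have := k.isLt; have := j.isLt
          have : (k : ℕ) ≠ j := fun h => hk (Fin.ext h)
          omega
        simp at h1
        omega
      have h1 : uv (b j) = u - ∑ i ∈ Finset.univ.erase j, uv (b i) := by
        rw [hsum, ← Finset.add_sum_erase _ _ (Finset.mem_univ j)]; simp
      rw [h1]
      refine isLP_sub huLP (isLP_sum _ _ ?_)
      intro k hk
      obtain ⟨i, rfl⟩ := hcov k (Finset.ne_of_mem_erase hk)
      rw [hσ]; exact hei i
  refine ⟨b, hbinj, hbr, fun i => ext_LP hP.1 hF.2.1 hF.2.2.1 _ (hbF i), ?_⟩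
  intro x hx
  choose c hc using fun i => isLP_dotp (hall i) hx
  refine ⟨c, ?_⟩
  have hxs : x ∈ Submodule.span ℝ (Set.range b) := by rw [hbr, hspan]; trivial
  obtain ⟨a, ha⟩ := (Submodule.mem_span_range_iff_exists_fun ℝ).mp hxs
  rw [← ha]
  refine Finset.sum_congr rfl fun i _ => ?_
  rw [← hc i, ← ha, ← dlin_apply, map_sum]
  simp [hdual]
end
end

section
/- Let P ⊆ ℝ^d be a d-dimensional simplicial reflexive polytope, F a facet of P, and v_1, v_2 ∈ 𝒱(F) with v_1 ≠ v_2. Set y_1 = n(F,v_1) and y_2 = n(F,v_2), and suppose y_1 ≠ y_2, ⟨u_F, y_1⟩ = ⟨u_F, y_2⟩ = 0, and ⟨u_F^{v_1}, y_1⟩ = ⟨u_F^{v_2}, y_2⟩ = −1. Then there is no vertex x ∈ 𝒱(P) with ⟨u_F, x⟩ = −1 and ⟨u_F^{v_1}, x⟩ = ⟨u_F^{v_2}, x⟩ = −1. -/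
noncomputable section

lemma dotp_add_left {d : ℕ} (a b y : Fin d → ℝ) : dotp (a + b) y = dotp a y + dotp b y := by
  simp [dotp, add_mul, Finset.sum_add_distrib]

lemma dotp_sub_left {d : ℕ} (a b y : Fin d → ℝ) : dotp (a - b) y = dotp a y - dotp b y := by
  simp [dotp, sub_mul, Finset.sum_sub_distrib]

lemma dotp_smul_left {d : ℕ} (c : ℝ) (a y : Fin d → ℝ) : dotp (c • a) y = c * dotp a y := by
  simp [dotp, mul_assoc, Finset.mul_sum]

/-- `dotp w` as a linear map. -/
def dotpL {d : ℕ} (w : Fin d → ℝ) : (Fin d → ℝ) →ₗ[ℝ] ℝ where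
  toFun y := dotp w y
  map_add' x y := by simp [dotp, mul_add, Finset.sum_add_distrib]
  map_smul' c x := by simp [dotp, Finset.mul_sum, mul_left_comm]

lemma dotpL_apply {d : ℕ} (w y : Fin d → ℝ) : dotpL w y = dotp w y := rfl

lemma dotp_add_right {d : ℕ} (a b y : Fin d → ℝ) : dotp y (a + b) = dotp y a + dotp y b :=
  (dotpL y).map_add a b

lemma dotp_smul_right {d : ℕ} (c : ℝ) (a y : Fin d → ℝ) : dotp y (c • a) = c * dotp y a := by
  exact (dotpL y).map_smul c a

lemma dotp_int {d : ℕ} {a b : Fin d → ℝ} (ha : IsLP a) (hb : IsLP b) :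
    ∃ n : ℤ, dotp a b = n := by
  choose f hf using ha
  choose g hg using hb
  exact ⟨∑ i, f i * g i, by simp [dotp, hf, hg]⟩

/-- The set `G` separates functionals. -/
def SepFun {d : ℕ} (G : Set (Fin d → ℝ)) : Prop := ∀ D : Fin d → ℝ, (∀ y ∈ G, dotp D y = 0) → D = 0

lemma sep_of_span {d : ℕ} {G : Set (Fin d → ℝ)} (h : Submodule.span ℝ G = ⊤) : SepFun G := by
  intro D hD
  have h1 : dotpL D = 0 := LinearMap.ext_on h (fun y hy => hD y hy)
  have h2 : dotpL D D = 0 := by rw [h1]; rfl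
  rw [dotpL_apply, dotp] at h2
  rw [Finset.sum_eq_zero_iff_of_nonneg (fun i _ => mul_self_nonneg _)] at h2
  funext i
  simpa using h2 i (Finset.mem_univ i)

lemma span_of_sep {d : ℕ} {G : Set (Fin d → ℝ)} (h : SepFun G) : Submodule.span ℝ G = ⊤ := by
  by_contra hne
  obtain ⟨f, hf, hle⟩ := Submodule.exists_le_ker_of_lt_top _ (lt_top_iff_ne_top.2 hne)
  apply hf
  have hrep : ∀ y, f y = dotp (fun i => f (Pi.single i 1)) y := by
    intro y
    rw [LinearMap.pi_apply_eq_sum_univ f y, dotp]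
    refine Finset.sum_congr rfl fun i _ => ?_
    rw [smul_eq_mul, mul_comm]
    congr 2
    funext j
    simp [Pi.single_apply, eq_comm]
  have h0 := h (fun i => f (Pi.single i 1)) (fun y hy => by
    rw [← hrep]; exact hle (Submodule.subset_span hy))
  ext i
  simpa using congrFun h0 i

lemma vectorSpan_le_ker {d : ℕ} {G : Set (Fin d → ℝ)} {w : Fin d → ℝ} (h1 : ∀ y ∈ G, dotp w y = 1) :
    vectorSpan ℝ G ≤ LinearMap.ker (dotpL w) := by
  rw [vectorSpan_def, Submodule.span_le]
  rintro _ ⟨a, ha, b, hb, rfl⟩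
  have e : dotpL w (a - b) = dotp w a - dotp w b := (dotpL w).map_sub a b
  rw [h1 a ha, h1 b hb, sub_self] at e
  exact e

lemma sep_of_facet {d : ℕ} (hd : 0 < d) {P G : Set (Fin d → ℝ)} {w : Fin d → ℝ}
    (h : IsFacetNormal P G w) : SepFun G := by
  obtain ⟨⟨p, hp⟩, -, hG, hr⟩ := h
  have h1 : ∀ y ∈ G, dotp w y = 1 := fun y hy => by rw [hG] at hy; exact hy.2
  have hker := vectorSpan_le_ker h1
  apply sep_of_span
  have hle : vectorSpan ℝ G < Submodule.span ℝ G := by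
    refine SetLike.lt_iff_le_and_exists.2 ⟨?_, p, Submodule.subset_span hp, fun hh => ?_⟩
    · rw [vectorSpan_def, Submodule.span_le]
      rintro _ ⟨a, ha, b, hb, rfl⟩
      exact Submodule.sub_mem _ (Submodule.subset_span ha) (Submodule.subset_span hb)
    · have := hker hh
      rw [LinearMap.mem_ker, dotpL_apply, h1 p hp] at this
      norm_num at this
  have := Submodule.finrank_lt_finrank_of_lt hle
  apply Submodule.eq_top_of_finrank_eq
  have h3 := Submodule.finrank_le (Submodule.span ℝ G)
  rw [Module.finrank_fin_fun] at *
  omega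

lemma facet_of_sep {d : ℕ} (hd : 0 < d) {P : Set (Fin d → ℝ)} {w : Fin d → ℝ}
    (hv : ∀ y ∈ P, dotp w y ≤ 1) (h : SepFun {y ∈ P | dotp w y = 1}) :
    IsFacetNormal P {y ∈ P | dotp w y = 1} w := by
  have hne : ({y ∈ P | dotp w y = 1} : Set (Fin d → ℝ)).Nonempty := by
    by_contra hc
    rw [Set.not_nonempty_iff_eq_empty] at hc
    rw [hc] at h
    have := congrFun (h (fun _ => 1) (by simp)) ⟨0, hd⟩
    norm_num at this
  refine ⟨hne, hv, rfl, ?_⟩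
  have hsp := span_of_sep h
  set G := {y ∈ P | dotp w y = 1} with hG
  have h1 : ∀ y ∈ G, dotp w y = 1 := fun y hy => hy.2
  have hker := vectorSpan_le_ker h1
  obtain ⟨p, hp⟩ := hne
  have hlt : Module.finrank ℝ (vectorSpan ℝ G) < d := by
    have : vectorSpan ℝ G ≠ ⊤ := by
      intro ht
      have hh : p ∈ vectorSpan ℝ G := by rw [ht]; trivial
      have := hker hh
      rw [LinearMap.mem_ker, dotpL_apply, h1 p hp] at this
      norm_num at this
    simpa using Submodule.finrank_lt this
  have hle : Submodule.span ℝ G ≤ vectorSpan ℝ G ⊔ Submodule.span ℝ {p} := by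
    rw [Submodule.span_le]
    intro a ha
    have : a = (a - p) + p := by simp
    rw [this]
    exact Submodule.add_mem_sup (vsub_mem_vectorSpan ℝ ha hp) (Submodule.mem_span_singleton_self p)
  have h4 := Submodule.finrank_mono hle
  rw [hsp, finrank_top, Module.finrank_fin_fun] at h4
  have h5 := Submodule.finrank_add_le_finrank_add_finrank (vectorSpan ℝ G) (Submodule.span ℝ {p})
  have h6 : Module.finrank ℝ (Submodule.span ℝ {p}) ≤ 1 := by
    simpa using finrank_span_le_card (R := ℝ) ({p} : Set (Fin d → ℝ))
  omega

lemma lp_of_sep {d : ℕ} {P : Set (Fin d → ℝ)} (hP : IsReflexive P) {w : Fin d → ℝ}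
    (hv : ∀ y ∈ P, dotp w y ≤ 1) (h : SepFun {y ∈ P | dotp w y = 1}) : IsLP w := by
  obtain ⟨-, -, V, hV, hdual⟩ := hP
  apply hV
  have hext : w ∈ Set.extremePoints ℝ (dualPolytope P) := by
    rw [mem_extremePoints_iff_left]
    refine ⟨hv, ?_⟩
    rintro p hp q hq ⟨a, b, ha, hb, hab, rfl⟩
    rw [← sub_eq_zero]
    apply h
    rintro y ⟨hy, hy1⟩
    have h1 := hp y hy
    have h2 := hq y hy
    rw [dotp_sub_left, hy1]
    rw [dotp_add_left, dotp_smul_left, dotp_smul_left] at hy1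
    nlinarith
  rw [hdual] at hext
  exact extremePoints_convexHull_subset hext

lemma face_isExtreme {d : ℕ} {P : Set (Fin d → ℝ)} {w : Fin d → ℝ}
    (hv : ∀ y ∈ P, dotp w y ≤ 1) : IsExtreme ℝ P {y ∈ P | dotp w y = 1} := by
  refine ⟨fun y hy => hy.1, ?_⟩
  rintro p hp q hq _ ⟨-, h1⟩ ⟨a, b, ha, hb, hab, rfl⟩
  refine ⟨hp, ?_⟩
  have h1' := hv p hp
  have h2 := hv q hq
  rw [dotp_add_right, dotp_smul_right, dotp_smul_right] at h1
  nlinarith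

lemma ext_facet {d : ℕ} {P G : Set (Fin d → ℝ)} {w : Fin d → ℝ} (h : IsFacetNormal P G w)
    (y : Fin d → ℝ) : y ∈ Set.extremePoints ℝ G ↔ y ∈ Set.extremePoints ℝ P ∧ dotp w y = 1 := by
  obtain ⟨-, hv, rfl, -⟩ := h
  rw [(face_isExtreme hv).extremePoints_eq]
  constructor
  · rintro ⟨h1, h2⟩
    exact ⟨h2, h1.2⟩
  · rintro ⟨h1, h2⟩
    exact ⟨⟨h1.1, h2⟩, h1⟩

lemma hull_ext {d : ℕ} {P G : Set (Fin d → ℝ)} {w : Fin d → ℝ} (hP : IsReflexive P)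
    (h : IsFacetNormal P G w) : G = convexHull ℝ (Set.extremePoints ℝ G) := by
  obtain ⟨⟨V, hV, hPV⟩, -⟩ := hP
  have hfin : (Set.extremePoints ℝ G).Finite := by
    refine V.finite_toSet.subset fun y hy => ?_
    have := ((ext_facet h y).1 hy).1
    rw [hPV] at this
    exact extremePoints_convexHull_subset this
  have hcont : Continuous (fun y : Fin d → ℝ => dotp w y) := (dotpL w).continuous_of_finiteDimensional
  have hPc : IsCompact P := by rw [hPV]; exact V.finite_toSet.isCompact_convexHull ℝ
  have hPconv : Convex ℝ P := by rw [hPV]; exact convex_convexHull ℝ _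
  have hGe : G = P ∩ {y | dotp w y = 1} := h.2.2.1
  have hGc : IsCompact G := by
    rw [hGe]; exact hPc.inter_right (isClosed_eq hcont continuous_const)
  have hGconv : Convex ℝ G := by
    rw [hGe]
    exact hPconv.inter (convex_hyperplane (dotpL w).isLinear 1)
  have := closure_convexHull_extremePoints hGc hGconv
  rw [← (hfin.isCompact_convexHull ℝ).isClosed.closure_eq, this]

lemma sep_ext {d : ℕ} (hd : 0 < d) {P G : Set (Fin d → ℝ)} {w : Fin d → ℝ} (hP : IsReflexive P)
    (h : IsFacetNormal P G w) : SepFun (Set.extremePoints ℝ G) := by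
  apply sep_of_span
  have h1 := span_of_sep (sep_of_facet hd h)
  rw [hull_ext hP h] at h1
  rw [eq_top_iff, ← h1, Submodule.span_le]
  exact convexHull_min Submodule.subset_span (Submodule.convex _)

lemma lp_ext {d : ℕ} {P : Set (Fin d → ℝ)} (hP : IsReflexive P) {y : Fin d → ℝ}
    (hy : y ∈ Set.extremePoints ℝ P) : IsLP y := by
  obtain ⟨⟨V, hV, hPV⟩, -⟩ := hP
  rw [hPV] at hy
  exact hV _ (extremePoints_convexHull_subset hy)

/-- Rotating a valid functional until it hits a new point. -/
lemma rotate {d : ℕ} {P : Set (Fin d → ℝ)} (hP : IsReflexive P) {w g x : Fin d → ℝ}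
    (hv : ∀ y ∈ P, dotp w y ≤ 1) (hg : ∀ y ∈ P, dotp w y = 1 → 0 ≤ dotp g y)
    (hx : x ∈ Set.extremePoints ℝ P) (hxg : dotp g x < 0) :
    ∃ s : ℝ, 0 < s ∧ (∀ y ∈ P, dotp (w - s • g) y ≤ 1) ∧
      ∃ z ∈ P, dotp g z < 0 ∧ dotp (w - s • g) z = 1 := by
  obtain ⟨⟨V, hV, hPV⟩, -⟩ := hP
  have hVP : ∀ y ∈ V, y ∈ P := fun y hy => by rw [hPV]; exact subset_convexHull ℝ _ hy
  have hxV : x ∈ V := by rw [hPV] at hx; exact extremePoints_convexHull_subset hx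
  obtain ⟨z, hz, hmin⟩ := (V.filter (fun y => dotp g y < 0)).exists_min_image
    (fun y => (1 - dotp w y) / (-dotp g y)) ⟨x, by simp [hxV, hxg]⟩
  rw [Finset.mem_filter] at hz
  obtain ⟨hzV, hzg⟩ := hz
  have hzw : dotp w z < 1 := lt_of_le_of_ne (hv z (hVP z hzV)) fun h => by
    linarith [hg z (hVP z hzV) h]
  have hs : 0 < (1 - dotp w z) / (-dotp g z) := div_pos (by linarith) (by linarith)
  refine ⟨_, hs, ?_, z, hVP z hzV, hzg, ?_⟩
  · set s := (1 - dotp w z) / (-dotp g z)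
    have hsub : P ⊆ {y | dotp (w - s • g) y ≤ 1} := by
      rw [hPV]
      refine convexHull_min ?_ (convex_halfSpace_le (dotpL (w - s • g)).isLinear 1)
      intro y hy
      rw [Set.mem_ofPred_eq, dotp_sub_left, dotp_smul_left]
      have hyw := hv y (hVP y hy)
      by_cases hyg : dotp g y < 0
      · have := hmin y (Finset.mem_filter.2 ⟨hy, hyg⟩)
        rw [le_div_iff₀ (by linarith)] at this
        change s * _ ≤ _ at this
        linarith
      · nlinarith [mul_nonneg hs.le (not_lt.1 hyg)]
    exact fun y hy => hsub hy
  · rw [dotp_sub_left, dotp_smul_left]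
    have : dotp g z ≠ 0 := hzg.ne
    field_simp
    ring

lemma nbr_normal {d : ℕ} (hd : 0 < d) {P : Set (Fin d → ℝ)} (hP : IsReflexive P)
    (hs : IsSimplicial P) {F : Set (Fin d → ℝ)} {u : Fin d → ℝ} (hF : IsFacetNormal P F u)
    {uv : (Fin d → ℝ) → (Fin d → ℝ)}
    (huv : ∀ w ∈ Set.extremePoints ℝ F, dotp (uv w) w = 1 ∧
      ∀ w' ∈ Set.extremePoints ℝ F, w' ≠ w → dotp (uv w) w' = 0)
    {v₁ : Fin d → ℝ} (hv₁ : v₁ ∈ Set.extremePoints ℝ F)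
    {y₁ : Fin d → ℝ} (hy₁ : NbrVertex P F v₁ y₁) (h01 : dotp u y₁ = 0)
    (hm1 : dotp (uv v₁) y₁ = -1) :
    y₁ ∈ Set.extremePoints ℝ P ∧ ∃ F₁, IsFacetNormal P F₁ (u - uv v₁) ∧
      Set.extremePoints ℝ F₁ = insert y₁ (Set.extremePoints ℝ F \ {v₁}) := by
  obtain ⟨F₁, ⟨⟨w, hw⟩, -, hsub⟩, hy, hyF⟩ := hy₁
  have hwe : w = u - uv v₁ := by
    have hD : w - (u - uv v₁) - (dotp (w - (u - uv v₁)) v₁) • uv v₁ = 0 := by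
      apply sep_ext hd hP hF
      intro z hz
      by_cases hzv : z = v₁
      · subst hzv
        simp only [dotp_sub_left, dotp_smul_left, (huv z hz).1]
        ring
      · have h1 : z ∈ F₁ := hsub ⟨hz, hzv⟩
        rw [hw.2.2.1] at h1
        simp only [dotp_sub_left, dotp_smul_left, (huv v₁ hv₁).2 z hz hzv, h1.2,
          ((ext_facet hF z).1 hz).2]
        ring
    have h2 : dotp (w - (u - uv v₁) - (dotp (w - (u - uv v₁)) v₁) • uv v₁) y₁ = 0 := by
      rw [hD]; simp [dotp]
    rw [dotp_sub_left _ (_ • _), dotp_smul_left, hm1] at h2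
    have h3 : dotp (w - (u - uv v₁)) y₁ = 0 := by
      rw [dotp_sub_left, dotp_sub_left, h01, hm1, ((ext_facet hw y₁).1 hy).2]; norm_num
    have h4 : dotp (w - (u - uv v₁)) v₁ = 0 := by linarith
    rw [h4, zero_smul, sub_zero] at hD
    exact sub_eq_zero.1 hD
  refine ⟨((ext_facet hw y₁).1 hy).1, F₁, hwe ▸ hw, ?_⟩
  have hcF := hs F ⟨u, hF⟩
  have hc1 := hs F₁ ⟨w, hw⟩
  have hf : (Set.extremePoints ℝ F).Finite := Set.finite_of_ncard_pos (by omega)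
  have hf1 : (Set.extremePoints ℝ F₁).Finite := Set.finite_of_ncard_pos (by omega)
  symm
  apply Set.eq_of_subset_of_ncard_le _ _ hf1
  · intro z hz
    rcases hz with rfl | hz
    · exact hy
    · refine (ext_facet hw z).2 ⟨((ext_facet hF z).1 hz.1).1, ?_⟩
      have h1 : z ∈ F₁ := hsub hz
      rw [hw.2.2.1] at h1
      exact h1.2
  · rw [Set.ncard_insert_of_notMem (fun h => hyF h.1.1) (hf.subset Set.sdiff_subset),
      Set.ncard_sdiff_singleton_of_mem hv₁]
    omega

lemma half {d : ℕ} (hd : 0 < d) {P : Set (Fin d → ℝ)} (hP : IsReflexive P)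
    (hs : IsSimplicial P) {F : Set (Fin d → ℝ)} {u : Fin d → ℝ} (hF : IsFacetNormal P F u)
    {uv : (Fin d → ℝ) → (Fin d → ℝ)}
    (huv : ∀ w ∈ Set.extremePoints ℝ F, dotp (uv w) w = 1 ∧
      ∀ w' ∈ Set.extremePoints ℝ F, w' ≠ w → dotp (uv w) w' = 0)
    {v₁ v₂ : Fin d → ℝ} (hv₁ : v₁ ∈ Set.extremePoints ℝ F)
    (hv₂ : v₂ ∈ Set.extremePoints ℝ F) (hvne : v₁ ≠ v₂)
    {y₁ y₂ : Fin d → ℝ} (hy₁ : NbrVertex P F v₁ y₁) (hy₂ : NbrVertex P F v₂ y₂)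
    (hyne : y₁ ≠ y₂) (h01 : dotp u y₁ = 0) (h02 : dotp u y₂ = 0)
    (hm1 : dotp (uv v₁) y₁ = -1) (hm2 : dotp (uv v₂) y₂ = -1)
    {x : Fin d → ℝ} (hx : x ∈ Set.extremePoints ℝ P) (hx0 : dotp u x = -1)
    (hx1 : dotp (uv v₁) x = -1) (hx2 : dotp (uv v₂) x = -1) :
    dotp (uv v₂) y₁ = 0 ∧ IsFacetNormal P {y ∈ P | dotp (u - uv v₁ - uv v₂) y = 1}
      (u - uv v₁ - uv v₂) := by
  obtain ⟨hyP, F₁, hF₁, hE₁⟩ := nbr_normal hd hP hs hF huv hv₁ hy₁ h01 hm1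
  obtain ⟨-, F₂, hF₂, hE₂⟩ := nbr_normal hd hP hs hF huv hv₂ hy₂ h02 hm2
  have hu1 : ∀ z ∈ Set.extremePoints ℝ F, dotp u z = 1 := fun z hz => ((ext_facet hF z).1 hz).2
  -- the coordinate `a = ⟨u^{v₂}, y₁⟩` is a nonnegative integer
  have ha : 0 ≤ dotp (uv v₂) y₁ := by
    have hlp : IsLP (u - uv v₂) := by
      refine lp_of_sep hP hF₂.2.1 ?_
      rw [← hF₂.2.2.1]
      exact sep_of_facet hd hF₂
    obtain ⟨n, hn⟩ := dotp_int hlp (lp_ext hP hyP)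
    have hle := hF₂.2.1 y₁ hyP.1
    have hne : dotp (u - uv v₂) y₁ ≠ 1 := by
      intro h
      have := (ext_facet hF₂ y₁).2 ⟨hyP, h⟩
      rw [hE₂] at this
      rcases this with h | h
      · exact hyne h
      · have := hu1 _ h.1
        rw [h01] at this
        norm_num at this
    have hlt := lt_of_le_of_ne hle hne
    have hn0 : n < 1 := by rw [hn] at hlt; exact_mod_cast hlt
    have hn1 : (n : ℝ) ≤ 0 := by exact_mod_cast Int.lt_add_one_iff.1 hn0
    rw [← hn, dotp_sub_left, h01] at hn1
    linarith
  set a := dotp (uv v₂) y₁ with hadef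
  set g := uv v₂ + a • uv v₁ with hg
  have hgy : dotp g y₁ = 0 := by
    rw [hg, dotp_add_left, dotp_smul_left, hm1, ← hadef]; ring
  have hgv2 : dotp g v₂ = 1 := by
    rw [hg, dotp_add_left, dotp_smul_left, (huv v₂ hv₂).1, (huv v₁ hv₁).2 v₂ hv₂ hvne.symm]; ring
  have hgo : ∀ z ∈ Set.extremePoints ℝ F, z ≠ v₁ → z ≠ v₂ → dotp g z = 0 := by
    intro z hz h1 h2
    rw [hg, dotp_add_left, dotp_smul_left, (huv v₂ hv₂).2 z hz h2, (huv v₁ hv₁).2 z hz h1]; ring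
  have hgx : dotp g x = -1 - a := by
    rw [hg, dotp_add_left, dotp_smul_left, hx1, hx2]; ring
  have hgF : ∀ y ∈ P, dotp (u - uv v₁) y = 1 → 0 ≤ dotp g y := by
    intro y hy hy1
    have hyF : y ∈ F₁ := by rw [hF₁.2.2.1]; exact ⟨hy, hy1⟩
    rw [hull_ext hP hF₁, hE₁] at hyF
    have hsub : convexHull ℝ (insert y₁ (Set.extremePoints ℝ F \ {v₁})) ⊆ {y | 0 ≤ dotp g y} := by
      refine convexHull_min ?_ (convex_halfSpace_ge (dotpL g).isLinear 0)
      rintro z (rfl | hz)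
      · exact hgy.ge
      · by_cases h2 : z = v₂
        · rw [h2, Set.mem_ofPred_eq, hgv2]; norm_num
        · exact (hgo z hz.1 hz.2 h2).ge
    exact hsub hyF
  obtain ⟨s, hs0, hval, z, hzP, hzg, hz1⟩ := rotate hP hF₁.2.1 hgF hx (by rw [hgx]; linarith)
  have huo : ∀ z ∈ Set.extremePoints ℝ F, z ≠ v₁ → dotp (u - uv v₁) z = 1 := by
    intro z hz h1
    rw [dotp_sub_left, hu1 z hz, (huv v₁ hv₁).2 z hz h1]; ring
  have hsep : SepFun {y ∈ P | dotp (u - uv v₁ - s • g) y = 1} := by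
    intro D hD
    have hDg : D - dotp D v₂ • g = 0 := by
      apply sep_ext hd hP hF₁
      rw [hE₁]
      rintro t (rfl | ht)
      · rw [dotp_sub_left, dotp_smul_left, hgy, hD t ⟨hyP.1, ?_⟩]
        · ring
        · rw [dotp_sub_left, dotp_smul_left, hgy, dotp_sub_left, h01, hm1]; ring
      · by_cases h2 : t = v₂
        · rw [h2, dotp_sub_left, dotp_smul_left, hgv2]; ring
        · have hg0 := hgo t ht.1 ht.2 h2
          rw [dotp_sub_left, dotp_smul_left, hg0, hD t ⟨((ext_facet hF t).1 ht.1).1.1, ?_⟩]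
          · ring
          · rw [dotp_sub_left, dotp_smul_left, hg0, huo t ht.1 ht.2]; ring
    have hz0 := hD z ⟨hzP, hz1⟩
    have h1 : dotp (D - dotp D v₂ • g) z = 0 := by rw [hDg]; simp [dotp]
    rw [dotp_sub_left, dotp_smul_left, hz0] at h1
    have h2 : dotp D v₂ = 0 := by
      have : dotp D v₂ * dotp g z = 0 := by linarith
      exact (mul_eq_zero.1 this).resolve_right hzg.ne
    rw [h2, zero_smul, sub_zero] at hDg
    exact hDg
  have hlp := lp_of_sep hP hval hsep
  obtain ⟨n, hn⟩ := dotp_int hlp (lp_ext hP ((ext_facet hF v₂).1 hv₂).1)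
  rw [dotp_sub_left, dotp_smul_left, hgv2, huo v₂ hv₂ hvne.symm] at hn
  have hs1 : 1 ≤ s := by
    have : (n : ℝ) < 1 := by linarith
    have hn0 : n < 1 := by exact_mod_cast this
    have hn1 : (n : ℝ) ≤ 0 := by exact_mod_cast Int.lt_add_one_iff.1 hn0
    linarith
  have hxv := hval x hx.1
  rw [dotp_sub_left, dotp_smul_left, hgx, dotp_sub_left, hx0, hx1] at hxv
  have ha0 : a = 0 := by nlinarith
  have hse : s = 1 := by rw [ha0] at hxv; linarith
  refine ⟨ha0, ?_⟩
  have hge : s • g = uv v₂ := by rw [hse, hg, ha0]; simp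
  rw [hge] at hval hsep
  exact facet_of_sep hd hval hsep

/-- given distinct vertices `v₁, v₂` of a facet `F` whose neighboring vertices
`y₁ ≠ y₂` lie in `H(F,0)` with `⟨u_F^{v₁}, y₁⟩ = ⟨u_F^{v₂}, y₂⟩ = -1`, there is no vertex
`x` with `⟨u_F, x⟩ = -1` and `⟨u_F^{v₁}, x⟩ = ⟨u_F^{v₂}, x⟩ = -1`. -/
theorem stmt14 {d : ℕ} (P : Set (Fin d → ℝ)) (hP : IsReflexive P) (hs : IsSimplicial P)
    (F : Set (Fin d → ℝ)) (u : Fin d → ℝ) (hF : IsFacetNormal P F u)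
    (uv : (Fin d → ℝ) → (Fin d → ℝ))
    (huv : ∀ w ∈ Set.extremePoints ℝ F, dotp (uv w) w = 1 ∧
      ∀ w' ∈ Set.extremePoints ℝ F, w' ≠ w → dotp (uv w) w' = 0)
    (v₁ v₂ : Fin d → ℝ) (hv₁ : v₁ ∈ Set.extremePoints ℝ F)
    (hv₂ : v₂ ∈ Set.extremePoints ℝ F) (hvne : v₁ ≠ v₂)
    (y₁ y₂ : Fin d → ℝ) (hy₁ : NbrVertex P F v₁ y₁) (hy₂ : NbrVertex P F v₂ y₂)
    (hyne : y₁ ≠ y₂) (h01 : dotp u y₁ = 0) (h02 : dotp u y₂ = 0)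
    (hm1 : dotp (uv v₁) y₁ = -1) (hm2 : dotp (uv v₂) y₂ = -1) :
    ¬ ∃ x ∈ Set.extremePoints ℝ P,
      dotp u x = -1 ∧ dotp (uv v₁) x = -1 ∧ dotp (uv v₂) x = -1 := by
  rintro ⟨x, hx, hx0, hx1, hx2⟩
  have hd : 0 < d := by
    rcases Nat.eq_zero_or_pos d with rfl | h
    · exact absurd (Subsingleton.elim v₁ v₂) hvne
    · exact h
  obtain ⟨ha, hG⟩ := half hd hP hs hF huv hv₁ hv₂ hvne hy₁ hy₂ hyne h01 h02 hm1 hm2 hx hx0 hx1 hx2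
  obtain ⟨hb, -⟩ := half hd hP hs hF huv hv₂ hv₁ hvne.symm hy₂ hy₁ hyne.symm h02 h01 hm2 hm1
    hx hx0 hx2 hx1
  obtain ⟨hyP₁, -⟩ := nbr_normal hd hP hs hF huv hv₁ hy₁ h01 hm1
  obtain ⟨hyP₂, -⟩ := nbr_normal hd hP hs hF huv hv₂ hy₂ h02 hm2
  have hcG := hs _ ⟨_, hG⟩
  have hcF := hs F ⟨u, hF⟩
  have hfG := Set.finite_of_ncard_pos (s := Set.extremePoints ℝ
    {y ∈ P | dotp (u - uv v₁ - uv v₂) y = 1}) (by omega)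
  have hfF : (Set.extremePoints ℝ F).Finite := Set.finite_of_ncard_pos (by omega)
  have hu1 : ∀ z ∈ Set.extremePoints ℝ F, dotp u z = 1 := fun z hz => ((ext_facet hF z).1 hz).2
  have hsub : insert x (insert y₁ (insert y₂ ((Set.extremePoints ℝ F \ {v₁}) \ {v₂}))) ⊆
      Set.extremePoints ℝ {y ∈ P | dotp (u - uv v₁ - uv v₂) y = 1} := by
    intro z hz
    rw [ext_facet hG]
    rcases hz with rfl | rfl | rfl | ⟨⟨hz, h1⟩, h2⟩
    · exact ⟨hx, by rw [dotp_sub_left, dotp_sub_left, hx0, hx1, hx2]; norm_num⟩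
    · exact ⟨hyP₁, by rw [dotp_sub_left, dotp_sub_left, h01, hm1, ha]; norm_num⟩
    · exact ⟨hyP₂, by rw [dotp_sub_left, dotp_sub_left, h02, hm2, hb]; norm_num⟩
    · refine ⟨((ext_facet hF z).1 hz).1, ?_⟩
      rw [dotp_sub_left, dotp_sub_left, hu1 z hz, (huv v₁ hv₁).2 z hz h1,
        (huv v₂ hv₂).2 z hz h2]
      norm_num
  have hle := Set.ncard_le_ncard hsub hfG
  have hf0 : ((Set.extremePoints ℝ F \ {v₁}) \ {v₂}).Finite :=
    (hfF.subset Set.sdiff_subset).subset Set.sdiff_subset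
  have hn2 : y₂ ∉ (Set.extremePoints ℝ F \ {v₁}) \ {v₂} := fun h => by
    have := hu1 _ h.1.1
    rw [h02] at this
    norm_num at this
  have hn1 : y₁ ∉ insert y₂ ((Set.extremePoints ℝ F \ {v₁}) \ {v₂}) := by
    rintro (h | h)
    · exact hyne h
    · have := hu1 _ h.1.1
      rw [h01] at this
      norm_num at this
  have hn0 : x ∉ insert y₁ (insert y₂ ((Set.extremePoints ℝ F \ {v₁}) \ {v₂})) := by
    rintro (h | h | h)
    · rw [h, h01] at hx0; norm_num at hx0
    · rw [h, h02] at hx0; norm_num at hx0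
    · have := hu1 _ h.1.1
      rw [hx0] at this
      norm_num at this
  rw [Set.ncard_insert_of_notMem hn0 ((hf0.insert _).insert _),
    Set.ncard_insert_of_notMem hn1 (hf0.insert _), Set.ncard_insert_of_notMem hn2 hf0,
    Set.ncard_sdiff_singleton_of_mem (show v₂ ∈ Set.extremePoints ℝ F \ {v₁} from
      ⟨hv₂, hvne.symm⟩), Set.ncard_sdiff_singleton_of_mem hv₁] at hle
  omega
end
end
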